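/- Let n = 20 and α = 1/10. For every integer r with 2 ≤ r ≤ 7, setting t = Φ⁻¹(1 − α/(n−r+1)), there exists θ ∈ ℝ²⁰ with fewer than r strictly positive components and fewer than r strictly negative components such that, for independent T₁,…,T₂₀ with Tᵢ ~ N(θᵢ, 1), P(#{i : Tᵢ ≤ −t} ≥ r or #{i : Tᵢ ≥ t} ≥ r) > α. In particular, for 2 ≤ r ≤ (n+1)/2 the uncorrected p-value min{p⁻_{r/n}, p⁺_{r/n}} is in general not a valid p-value for H_{r/n}. -/

import Mathlib

open MeasureTheory ProbabilityTheory

/-- The cumulative distribution function `Φ` of the standard normal distribution. -/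
noncomputable def stdNormalCDF (x : ℝ) : ℝ :=
  ((gaussianReal 0 1) (Set.Iic x)).toReal

/-!
Put `k = r - 1`. Give `k` coordinates a huge positive effect, `k` others a huge negative effect, and
leave the remaining `n - 2 * k` at zero. In the limit of infinite effects each side already counts
`k` exceedances, so a single null coordinate outside `(-t, t)` triggers a rejection, on whichever
side it falls. All null coordinates stay inside with probability `(2 * Φ(t) - 1) ^ (n - 2 * k)`, and
this is below `1 - α` for the parameters at hand.
-/

section SymmetricLaws

open Set

variable {μ : Measure ℝ} [IsProbabilityMeasure μ] [NullSingletonClass μ]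

lemma measureReal_Ioo_eq_max_cdf_sub (a b : ℝ) :
    μ.real (Ioo a b) = max (cdf μ b - cdf μ a) 0 := by
  have hIoc : μ (Ioc a b) = ENNReal.ofReal (cdf μ b - cdf μ a) := by
    rw [← StieltjesFunction.measure_Ioc, measure_cdf]
  rw [measureReal_congr Ioo_ae_eq_Ioc, measureReal_def, hIoc, ENNReal.toReal_ofReal']

lemma cdf_neg_eq_one_sub [μ.IsNegInvariant] (x : ℝ) : cdf μ (-x) = 1 - cdf μ x := by
  calc cdf μ (-x) = μ.real (Iic (-x)) := cdf_eq_real μ (-x)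
    _ = μ.real (-Ici x) := by rw [neg_Ici]
    _ = μ.real (Iio x)ᶜ := by rw [measureReal_def, Measure.measure_neg, compl_Iio, measureReal_def]
    _ = 1 - μ.real (Iic x) := by
      rw [probReal_compl_eq_one_sub measurableSet_Iio, measureReal_congr Iio_ae_eq_Iic]
    _ = 1 - cdf μ x := by rw [cdf_eq_real]

lemma measureReal_Ioo_neg_self [μ.IsNegInvariant] (t : ℝ) :
    μ.real (Ioo (-t) t) = max (2 * cdf μ t - 1) 0 := by
  rw [measureReal_Ioo_eq_max_cdf_sub, cdf_neg_eq_one_sub]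
  ring_nf

end SymmetricLaws

instance isNegInvariant_gaussianReal_zero (v : NNReal) : (gaussianReal 0 v).IsNegInvariant where
  neg_eq_self := by
    rw [Measure.neg_def]
    simpa only [neg_zero] using gaussianReal_map_neg (μ := 0) (v := v)

lemma stdNormalCDF_eq_cdf (x : ℝ) : stdNormalCDF x = cdf (gaussianReal 0 1) x :=
  (cdf_eq_real _ x).symm

lemma gaussianReal_Ioo_neg_self (t : ℝ) :
    (gaussianReal 0 1).real (Set.Ioo (-t) t) = max (2 * stdNormalCDF t - 1) 0 := by
  have := nullSingletonClass_gaussianReal (μ := 0) (one_ne_zero (α := NNReal))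
  rw [measureReal_Ioo_neg_self, stdNormalCDF_eq_cdf]

section Translates

open Set Filter Topology

variable (μ : Measure ℝ) [IsProbabilityMeasure μ] (t : ℝ)

lemma tendsto_map_add_real_Ici :
    Tendsto (fun c => (μ.map (· + c)).real (Ici t)) atTop (𝓝 1) := by
  have hpre (c : ℝ) : (μ.map (· + c)).real (Ici t) = μ.real (Ici (t - c)) := by
    rw [map_measureReal_apply (by fun_prop) measurableSet_Ici, preimage_add_const_Ici]
  have hIci : Tendsto (fun a => μ.real (Ici a)) atBot (𝓝 1) := by
    rw [← probReal_univ (μ := μ)]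
    exact (ENNReal.tendsto_toReal (measure_ne_top μ univ)).comp (tendsto_measure_Ici_atBot μ)
  simp_rw [hpre]
  exact hIci.comp (tendsto_atBot_add_const_left _ t tendsto_neg_atTop_atBot)

lemma tendsto_map_add_neg_real_Iic :
    Tendsto (fun c => (μ.map (· + -c)).real (Iic t)) atTop (𝓝 1) := by
  have hpre (c : ℝ) : (μ.map (· + -c)).real (Iic t) = cdf μ (t + c) := by
    rw [map_measureReal_apply (by fun_prop) measurableSet_Iic, preimage_add_const_Iic,
      sub_neg_eq_add, cdf_eq_real]
  simp_rw [hpre]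
  exact (tendsto_cdf_atTop μ).comp (tendsto_atTop_add_const_left _ t tendsto_id)

end Translates

section LocationModel

open Set Filter Topology

variable {ι : Type*} [Fintype ι]

/-- The location model with noise law `μ`: the joint law of independent `Tᵢ`, `i : ι`, for which
`Tᵢ - θᵢ` has law `μ`. -/
noncomputable def locationModel (μ : Measure ℝ) (θ : ι → ℝ) : Measure (ι → ℝ) :=
  Measure.pi fun i => μ.map (· + θ i)

lemma locationModel_gaussianReal_zero (v : NNReal) (θ : ι → ℝ) :
    locationModel (gaussianReal 0 v) θ = Measure.pi fun i => gaussianReal (θ i) v := by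
  simp only [locationModel, gaussianReal_map_add_const, zero_add]

variable (μ : Measure ℝ) [IsProbabilityMeasure μ]

instance isProbabilityMeasure_map_add_const (c : ℝ) : IsProbabilityMeasure (μ.map (· + c)) :=
  Measure.isProbabilityMeasure_map (by fun_prop)

instance isProbabilityMeasure_locationModel (θ : ι → ℝ) :
    IsProbabilityMeasure (locationModel μ θ) :=
  Measure.pi.instIsProbabilityMeasure _

lemma locationModel_real_pi (θ : ι → ℝ) (S : Finset ι) (s : ι → Set ℝ) :
    (locationModel μ θ).real ((S : Set ι).pi s) = ∏ i ∈ S, (μ.map (· + θ i)).real (s i) := by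
  simp only [locationModel, measureReal_def, Measure.pi_pi_finset, ENNReal.toReal_prod]

lemma locationModel_real_pi_of_eq_zero {θ : ι → ℝ} {S : Finset ι} (hθ : ∀ i ∈ S, θ i = 0)
    (s : Set ℝ) : (locationModel μ θ).real ((S : Set ι).pi fun _ => s) = μ.real s ^ S.card := by
  rw [locationModel_real_pi]
  exact Finset.prod_eq_pow_card fun i hi => by simp only [hθ i hi, add_zero, Measure.map_id']

variable {μ} in
lemma tendsto_locationModel_real_pi {θ : ℝ → ι → ℝ} {S : Finset ι} {s : ι → Set ℝ}
    (h : ∀ i ∈ S, Tendsto (fun M => (μ.map (· + θ M i)).real (s i)) atTop (𝓝 1)) :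
    Tendsto (fun M => (locationModel μ (θ M)).real ((S : Set ι).pi s)) atTop (𝓝 1) := by
  simpa only [locationModel_real_pi, Finset.prod_const_one] using tendsto_finsetProd S h

end LocationModel

section Replicability

open Set Filter Topology

variable {ι : Type*} [Fintype ι]

/-- The rejection event of the uncorrected directional test: at least `r` of the estimators are
`≤ -t`, or at least `r` of them are `≥ t`. -/
def rejectionRegion (ι : Type*) [Fintype ι] (r : ℕ) (t : ℝ) : Set (ι → ℝ) :=
  {x | r ≤ (Finset.univ.filter fun i => x i ≤ -t).card ∨
       r ≤ (Finset.univ.filter fun i => t ≤ x i).card}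

lemma card_add_one_le_card_filter {S : Finset ι} {p : ι → Prop} [DecidablePred p] {j : ι}
    (hj : j ∉ S) (hpj : p j) (hp : ∀ i ∈ S, p i) :
    S.card + 1 ≤ (Finset.univ.filter p).card := by
  classical
  rw [← Finset.card_insert_of_notMem hj]
  refine Finset.card_le_card fun i hi => (Finset.mem_filter_univ i).2 ?_
  obtain rfl | hi := Finset.mem_insert.1 hi
  exacts [hpj, hp i hi]

variable [DecidableEq ι]

/-- The parameter with effect `M` on `P`, effect `-M` on `N`, and no effect elsewhere. The sets are
meant to be disjoint; on an overlap `P` takes precedence. -/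
def opposingEffects (P N : Finset ι) (M : ℝ) (i : ι) : ℝ :=
  if i ∈ P then M else if i ∈ N then -M else 0

variable {P N : Finset ι} {M : ℝ}

lemma card_opposingEffects_pos_le (hM : 0 ≤ M) :
    (Finset.univ.filter fun i => 0 < opposingEffects P N M i).card ≤ P.card := by
  refine Finset.card_le_card fun i hi => ?_
  replace hi := (Finset.mem_filter_univ i).1 hi
  unfold opposingEffects at hi
  split_ifs at hi <;> first | assumption | linarith

lemma card_opposingEffects_neg_le (hM : 0 ≤ M) :
    (Finset.univ.filter fun i => opposingEffects P N M i < 0).card ≤ N.card := by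
  refine Finset.card_le_card fun i hi => ?_
  replace hi := (Finset.mem_filter_univ i).1 hi
  unfold opposingEffects at hi
  split_ifs at hi <;> first | assumption | linarith

lemma opposingEffects_of_mem_compl {i : ι} (hi : i ∈ (P ∪ N)ᶜ) : opposingEffects P N M i = 0 := by
  obtain ⟨hP, hN⟩ : i ∉ P ∧ i ∉ N := by simpa using hi
  simp only [opposingEffects, hP, hN, if_false]

lemma mem_rejectionRegion_of_notMem_Ioo {k : ℕ} {t : ℝ} {x : ι → ℝ} {j : ι}
    (hPk : k ≤ P.card) (hNk : k ≤ N.card) (hP : ∀ i ∈ P, t ≤ x i) (hN : ∀ i ∈ N, x i ≤ -t)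
    (hj : j ∈ (P ∪ N)ᶜ) (hxj : x j ∉ Ioo (-t) t) : x ∈ rejectionRegion ι (k + 1) t := by
  obtain ⟨hjP, hjN⟩ : j ∉ P ∧ j ∉ N := by simpa using hj
  obtain hneg | hpos : x j ≤ -t ∨ t ≤ x j := by
    simpa only [mem_Ioo, not_and_or, not_lt] using hxj
  · exact Or.inl ((Nat.succ_le_succ hNk).trans (card_add_one_le_card_filter hjN hneg hN))
  · exact Or.inr ((Nat.succ_le_succ hPk).trans (card_add_one_le_card_filter hjP hpos hP))

lemma add_sub_le_measureReal_rejectionRegion (π : Measure (ι → ℝ)) [IsProbabilityMeasure π]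
    {k : ℕ} (hPk : k ≤ P.card) (hNk : k ≤ N.card) (t : ℝ) :
    π.real ((P : Set ι).pi fun _ => Ici t) + π.real ((N : Set ι).pi fun _ => Iic (-t)) - 1
        - π.real ((((P ∪ N)ᶜ : Finset ι) : Set ι).pi fun _ => Ioo (-t) t)
      ≤ π.real (rejectionRegion ι (k + 1) t) := by
  set A := (P : Set ι).pi fun _ => Ici t
  set B := (N : Set ι).pi fun _ => Iic (-t)
  set C := (((P ∪ N)ᶜ : Finset ι) : Set ι).pi fun _ => Ioo (-t) t
  have hsub : A ∩ B ⊆ C ∪ rejectionRegion ι (k + 1) t := by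
    rintro x ⟨hA, hB⟩
    refine or_iff_not_imp_left.2 fun hC => ?_
    obtain ⟨j, hj, hxj⟩ : ∃ j ∈ (P ∪ N)ᶜ, x j ∉ Ioo (-t) t := by
      simpa only [C, Set.mem_pi, Finset.mem_coe, not_forall, exists_prop] using hC
    exact mem_rejectionRegion_of_notMem_Ioo hPk hNk hA hB hj hxj
  have hB : MeasurableSet B := .pi N.countable_toSet fun _ _ => measurableSet_Iic
  have hinter : π.real (A ∪ B) + π.real (A ∩ B) = π.real A + π.real B :=
    measureReal_union_add_inter hB
  have hcover : π.real (A ∩ B) ≤ π.real C + π.real (rejectionRegion ι (k + 1) t) :=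
    (measureReal_mono hsub).trans (measureReal_union_le _ _)
  linarith [measureReal_le_one (μ := π) (s := A ∪ B)]

lemma eventually_lt_measureReal_rejectionRegion (μ : Measure ℝ) [IsProbabilityMeasure μ]
    (hPN : Disjoint P N) {k : ℕ} (hPk : P.card = k) (hNk : N.card = k) {α t : ℝ}
    (hα : μ.real (Ioo (-t) t) ^ (Fintype.card ι - 2 * k) < 1 - α) :
    ∀ᶠ M in atTop,
      α < (locationModel μ (opposingEffects P N M)).real (rejectionRegion ι (k + 1) t) := by
  let π (M : ℝ) := locationModel μ (opposingEffects P N M)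
  have hP : Tendsto (fun M => (π M).real ((P : Set ι).pi fun _ => Ici t)) atTop (𝓝 1) :=
    tendsto_locationModel_real_pi fun i hi => by
      simpa only [opposingEffects, hi, if_true] using tendsto_map_add_real_Ici μ t
  have hN : Tendsto (fun M => (π M).real ((N : Set ι).pi fun _ => Iic (-t))) atTop (𝓝 1) :=
    tendsto_locationModel_real_pi fun i hi => by
      simpa only [opposingEffects, Finset.disjoint_right.1 hPN hi, hi, if_true, if_false] using
        tendsto_map_add_neg_real_Iic μ (-t)
  have hcard : (P ∪ N)ᶜ.card = Fintype.card ι - 2 * k := by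
    rw [Finset.card_compl, Finset.card_union_of_disjoint hPN, hPk, hNk, two_mul]
  have hnull (M : ℝ) : (π M).real ((((P ∪ N)ᶜ : Finset ι) : Set ι).pi fun _ => Ioo (-t) t) =
      μ.real (Ioo (-t) t) ^ (Fintype.card ι - 2 * k) := by
    rw [← hcard]
    exact locationModel_real_pi_of_eq_zero μ (fun _ => opposingEffects_of_mem_compl) _
  have hlim := ((hP.add hN).sub_const 1).sub_const (μ.real (Ioo (-t) t) ^ (Fintype.card ι - 2 * k))
  filter_upwards [hlim.eventually_const_lt (u := α) (by linarith)] with M hM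
  exact hM.trans_le (hnull M ▸ add_sub_le_measureReal_rejectionRegion (π M) hPk.ge hNk.ge t)

end Replicability

theorem uncorrected_pvalue_invalid_small_r_general {ι : Type*} [Fintype ι] (μ : Measure ℝ)
    [IsProbabilityMeasure μ] {k : ℕ} (hk : 2 * k ≤ Fintype.card ι) {α t : ℝ}
    (hα : μ.real (Set.Ioo (-t) t) ^ (Fintype.card ι - 2 * k) < 1 - α) :
    ∃ θ : ι → ℝ,
      (Finset.univ.filter fun i => 0 < θ i).card < k + 1 ∧
      (Finset.univ.filter fun i => θ i < 0).card < k + 1 ∧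
      α < (locationModel μ θ).real (rejectionRegion ι (k + 1) t) := by
  classical
  obtain ⟨P, -, hP⟩ := Finset.exists_subset_card_eq (s := (Finset.univ : Finset ι)) (n := k)
    (by rw [Finset.card_univ]; omega)
  obtain ⟨N, hNP, hN⟩ := Finset.exists_subset_card_eq (s := Pᶜ) (n := k)
    (by rw [Finset.card_compl, hP]; omega)
  have hPN : Disjoint P N := disjoint_compl_right.mono_right hNP
  obtain ⟨M, hM, hM0⟩ := ((eventually_lt_measureReal_rejectionRegion μ hPN hP hN hα).and
    (Filter.eventually_ge_atTop 0)).exists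
  exact ⟨opposingEffects P N M,
    Nat.lt_succ_of_le (hP ▸ card_opposingEffects_pos_le hM0),
    Nat.lt_succ_of_le (hN ▸ card_opposingEffects_neg_le hM0), hM⟩

lemma bonferroni_nonrejection_lt {k : ℕ} (hk : k ≤ 6) :
    max (2 * (1 - (1 / 10 : ℝ) / (20 - (k + 1 : ℕ) + 1)) - 1) 0 ^ (20 - 2 * k) < 1 - 1 / 10 := by
  interval_cases k <;> norm_num

/-- **Counterexample for small `r`.** For `n = 20`, `α = 1/10` and every integer
`2 ≤ r ≤ 7`, with `t = Φ⁻¹(1 − α/(n−r+1))`, there exists a null parameter `θ ∈ ℝ²⁰`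
(fewer than `r` strictly positive and fewer than `r` strictly negative components) such
that for independent `Tᵢ ~ N(θᵢ,1)` (modelled by the product measure),
`P(#{i : Tᵢ ≤ −t} ≥ r or #{i : Tᵢ ≥ t} ≥ r) > α`: the uncorrected p-value
`min{p⁻_{r/n}, p⁺_{r/n}}` is in general not valid for `H_{r/n}` when `r ≤ (n+1)/2`. -/
theorem uncorrected_pvalue_invalid_small_r :
    ∀ r : ℕ, 2 ≤ r → r ≤ 7 →
    ∀ t : ℝ, stdNormalCDF t = 1 - (1 / 10 : ℝ) / ((20 : ℝ) - (r : ℝ) + 1) →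
    ∃ θ : Fin 20 → ℝ,
      (Finset.univ.filter fun i => 0 < θ i).card < r ∧
      (Finset.univ.filter fun i => θ i < 0).card < r ∧
      (1 / 10 : ℝ) <
        ((Measure.pi fun i : Fin 20 => gaussianReal (θ i) 1)
          {x | r ≤ (Finset.univ.filter fun i : Fin 20 => x i ≤ -t).card ∨
               r ≤ (Finset.univ.filter fun i : Fin 20 => t ≤ x i).card}).toReal := by
  intro r hr2 hr7 t ht
  obtain ⟨k, rfl⟩ : ∃ k, r = k + 1 := ⟨r - 1, by omega⟩
  have hα : (gaussianReal 0 1).real (Set.Ioo (-t) t) ^ (Fintype.card (Fin 20) - 2 * k)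
      < 1 - 1 / 10 := by
    rw [gaussianReal_Ioo_neg_self, ht, Fintype.card_fin]
    exact bonferroni_nonrejection_lt (by omega)
  have hk : 2 * k ≤ Fintype.card (Fin 20) := by rw [Fintype.card_fin]; omega
  simpa only [locationModel_gaussianReal_zero, rejectionRegion, measureReal_def] using
    uncorrected_pvalue_invalid_small_r_general (gaussianReal 0 1) hk hα
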